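/- Let G be a finite planar graph with v(G) vertices and maximal vertex degree Δ(G). Then width(G) ≤ (6√2 + 4√3)·Δ(G)·√(v(G)). -/

import Mathlib

/-!
Common vocabulary for formalising Lackenby, "Spectral geometry, link
complements and surgery diagrams".
-/

/-- A finite multigraph: finite vertex and edge types, where each edge is
assigned an unordered pair of endpoints (loops and multiple edges allowed). -/
structure FinMultigraph where
  /-- the vertex type -/
  V : Type
  /-- the edge type -/
  E : Type
  [fintypeV : Fintype V]
  [fintypeE : Fintype E]
  [decEqV : DecidableEq V]
  /-- the two (possibly equal) endpoints of each edge -/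
  ends : E → Sym2 V

attribute [instance] FinMultigraph.fintypeV FinMultigraph.fintypeE FinMultigraph.decEqV

namespace FinMultigraph

/-- `∂A` : the set of edges with one endpoint in `A` and one endpoint not in `A`. -/
def edgeBoundary (G : FinMultigraph) (A : Set G.V) : Set G.E :=
  {e | ∃ u v : G.V, G.ends e = s(u, v) ∧ u ∈ A ∧ v ∉ A}

/-- The number `v(G)` of vertices of `G`. -/
def order (G : FinMultigraph) : ℕ := Fintype.card G.V

/-- The width of a total ordering `φ` of the vertices of `G`:
the maximum over `i` of `|∂(φ({1,…,i}))|`. -/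
noncomputable def orderingWidth (G : FinMultigraph) (φ : Fin G.order ≃ G.V) : ℕ :=
  Finset.sup Finset.univ fun i : Fin G.order =>
    (G.edgeBoundary (⇑φ '' {j | j ≤ i})).ncard

/-- The width of `G` : the minimum of the widths of all total orderings of its
vertices. -/
noncomputable def width (G : FinMultigraph) : ℕ :=
  sInf {w | ∃ φ : Fin G.order ≃ G.V, G.orderingWidth φ = w}

/-- The degree (valence) of a vertex: the number of edge-ends at `v`
(loops at `v` count twice). -/
noncomputable def degree (G : FinMultigraph) (v : G.V) : ℕ :=
  {e | v ∈ G.ends e}.ncard + {e | G.ends e = s(v, v)}.ncard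

/-- The maximal vertex degree `Δ(G)`. -/
noncomputable def maxDegree (G : FinMultigraph) : ℕ :=
  Finset.sup Finset.univ G.degree

/-- `G` is planar: it admits a topological embedding into the plane, given by an
injective placement of the vertices together with arcs realising the edges which
are embedded, meet the vertices only at their endpoints, and are pairwise
internally disjoint. -/
def IsPlanar (G : FinMultigraph) : Prop :=
  ∃ (fv : G.V → ℝ × ℝ) (fe : G.E → ℝ → ℝ × ℝ),
    Function.Injective fv ∧
    (∀ e, ContinuousOn (fe e) (Set.Icc 0 1)) ∧
    (∀ e, ∃ u v : G.V, G.ends e = s(u, v) ∧ fe e 0 = fv u ∧ fe e 1 = fv v) ∧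
    (∀ e, Set.InjOn (fe e) (Set.Ioo 0 1)) ∧
    (∀ e t, t ∈ Set.Ioo (0:ℝ) 1 → fe e t ∉ Set.range fv) ∧
    (∀ e e', e ≠ e' → ∀ t ∈ Set.Ioo (0:ℝ) 1, ∀ t' ∈ Set.Ioo (0:ℝ) 1,
      fe e t ≠ fe e' t')

/-- The Cheeger constant of a finite graph:
`h(G) = min { |∂A| / |A| : A ⊆ V(G), 0 < |A| ≤ v(G)/2 }`. -/
noncomputable def cheegerConst (G : FinMultigraph) : ℝ :=
  sInf {x : ℝ | ∃ A : Set G.V, 0 < A.ncard ∧ (A.ncard : ℝ) ≤ (G.order : ℝ) / 2 ∧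
    x = ((G.edgeBoundary A).ncard : ℝ) / (A.ncard : ℝ)}

end FinMultigraph

/-- Sort a finite multiset of naturals into descending order. -/
def descSort (m : Multiset ℕ) : List ℕ := (m.sort (· ≤ ·)).reverse

/-- Lexicographic comparison of multisets of naturals: each multiset is
reordered into a descending sequence and the sequences are compared
lexicographically. -/
def MultisetLexLE (m₁ m₂ : Multiset ℕ) : Prop :=
  descSort m₁ = descSort m₂ ∨ List.Lex (· < ·) (descSort m₁) (descSort m₂)

/-- `v₃`, the volume of the regular hyperbolic ideal tetrahedron:
`v₃ = 3Λ(π/3) ≈ 1.0149`, where `Λ(θ) = -∫₀^θ log |2 sin t| dt` is the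
Lobachevsky function. -/
noncomputable def v3 : ℝ := -3 * ∫ t in (0:ℝ)..(Real.pi / 3), Real.log (2 * Real.sin t)

/-- An abstract framework bundling the standard (informal) notions of links in
the 3-sphere, their diagrams, compact orientable 3-manifolds, rational surgery
diagrams, and the hyperbolic-geometric and width invariants used in Lackenby,
"Spectral geometry, link complements and surgery diagrams". -/
structure LinkTheory where
  /-- Links in the 3-sphere, up to ambient isotopy. -/
  Link : Type
  /-- Link diagrams (in the plane, equivalently in the 2-sphere). -/
  Diagram : Type
  /-- `IsDiagramOf D L` means that `D` is a diagram of the link `L`. -/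
  IsDiagramOf : Diagram → Link → Prop
  /-- Every link has a diagram. -/
  exists_diagram : ∀ L : Link, ∃ D, IsDiagramOf D L
  /-- The crossing number `c(D)` of a diagram. -/
  crossings : Diagram → ℕ
  /-- The twist number `t(D)` of a diagram: the number of twist regions, where a
  twist region is either a maximal collection of bigon regions whose union is
  connected, or a single crossing adjacent to no bigon regions. -/
  twists : Diagram → ℕ
  /-- Every twist region contains a crossing, so `t(D) ≤ c(D)`. -/
  twists_le_crossings : ∀ D, twists D ≤ crossings D
  /-- `D` is an alternating diagram. -/
  IsAlternating : Diagram → Prop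
  /-- `D` is highly twisted: each twist region contains at least 7 crossings and
  the diagram is alternating within each twist region. -/
  IsHighlyTwisted : Diagram → Prop
  /-- `D` is twist-reduced. -/
  IsTwistReduced : Diagram → Prop
  /-- The underlying 4-valent planar graph of `D` has no edge loops. -/
  HasNoEdgeLoops : Diagram → Prop
  /-- `L` is a hyperbolic link: its exterior admits a complete finite-volume
  hyperbolic structure. -/
  IsHyperbolicLink : Link → Prop
  /-- The volume of the complete hyperbolic metric on the complement `S³ - L`
  of a hyperbolic link `L`. -/
  vol : Link → ℝ
  /-- Hyperbolic volume is positive. -/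
  vol_pos : ∀ L, IsHyperbolicLink L → 0 < vol L
  /-- The Cheeger constant `h(S³ - L)` of the complement of a hyperbolic link:
  the infimum over compact codimension-zero submanifolds `A` with volume at most
  half that of the complement of `Area(∂A)/Volume(A)`. -/
  cheeger : Link → ℝ
  /-- `λ₁(S³ - L)`: the infimum of the nonzero spectrum of the Laplacian on the
  complement of a hyperbolic link. -/
  lambda1 : Link → ℝ
  /-- The max-width of a diagram: the maximum over `t ∈ ℝ` of the number of
  intersections of `ℝ × {t}` with the link projection. -/
  maxWidthD : Diagram → ℕ
  /-- The max-width of a link: the minimal max-width of any of its diagrams. -/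
  maxWidth : Link → ℕ
  maxWidth_def : ∀ L, maxWidth L = sInf {w | ∃ D, IsDiagramOf D L ∧ maxWidthD D = w}
  /-- The lex-width of a diagram (whose height function is Morse on the link with
  critical points at distinct values): the multiset whose members are the numbers
  of intersections of the link projection with `ℝ × {t}`, one for each of the open
  intervals into which the critical values divide `ℝ`. -/
  lexWidthD : Diagram → Multiset ℕ
  /-- The largest member of the lex-width multiset of a diagram is its max-width. -/
  maxWidthD_eq_sup_lexWidthD : ∀ D, maxWidthD D = (lexWidthD D).sup
  /-- `D` is a bridge diagram: the height function restricted to the link is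
  Morse and all of its local maxima occur above all of its local minima. -/
  IsBridgeDiagram : Diagram → Prop
  /-- The bridge number `b(L)`: the minimal number of local maxima in any bridge
  diagram of `L`. -/
  bridgeNumber : Link → ℕ
  /-- `L` is a knot (a link with one component). -/
  IsKnot : Link → Prop
  /-- The knot is tangle-composite: it admits an essential Conway sphere
  decomposition, i.e. a 2-sphere meeting it transversely in four points and
  splitting it into nontrivial tangles. -/
  IsTangleComposite : Link → Prop
  /-- The underlying 4-valent planar graph `G(D)` of a diagram, whose vertices
  are the crossings of `D`. -/
  graphOf : Diagram → FinMultigraph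
  graphOf_planar : ∀ D, (graphOf D).IsPlanar
  graphOf_degree : ∀ D v, (graphOf D).degree v = 4
  graphOf_order : ∀ D, (graphOf D).order = crossings D
  /-- The twist graph `T(D)`: one vertex for each twist region of `G(D)` and one
  edge for each edge of `G(D)` not lying in a twist region. -/
  twistGraphOf : Diagram → FinMultigraph
  twistGraphOf_order : ∀ D, (twistGraphOf D).order = twists D
  /-- Compact orientable 3-manifolds, up to homeomorphism. -/
  Manifold : Type
  /-- `M` is hyperbolic: its interior admits a complete finite-volume hyperbolic
  structure. -/
  IsHyperbolicManifold : Manifold → Prop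
  /-- `M` is closed: it has empty boundary. -/
  IsClosedManifold : Manifold → Prop
  /-- The volume of the hyperbolic metric on (the interior of) `M`. -/
  volM : Manifold → ℝ
  volM_pos : ∀ M, IsHyperbolicManifold M → 0 < volM M
  /-- The Cheeger constant `h(M)`: the infimum over compact codimension-zero
  submanifolds `A` with volume at most half that of `M` of `Area(∂A)/Volume(A)`. -/
  cheegerM : Manifold → ℝ
  /-- `λ₁(M)`: the infimum of the nonzero spectrum of the Laplacian on `M`. -/
  lambda1M : Manifold → ℝ
  /-- The Heegaard width of `M`: the minimal width `maxᵢ χ₋(∂₊Cᵢ)` of any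
  generalised Heegaard splitting `{C₁, …, Cₙ}` of `M`. -/
  heegWidth : Manifold → ℕ
  /-- The exterior of a link: the complement in `S³` of an open regular
  neighbourhood of the link. -/
  exterior : Link → Manifold
  /-- The exterior of a hyperbolic link carries the hyperbolic structure of the
  complement. -/
  exterior_hyperbolic : ∀ L, IsHyperbolicLink L ↔ IsHyperbolicManifold (exterior L)
  volM_exterior : ∀ L, IsHyperbolicLink L → volM (exterior L) = vol L
  cheegerM_exterior : ∀ L, IsHyperbolicLink L → cheegerM (exterior L) = cheeger L
  lambda1M_exterior : ∀ L, IsHyperbolicLink L → lambda1M (exterior L) = lambda1 L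
  /-- `M` is a congruence arithmetic hyperbolic 3-manifold: its fundamental group
  is a congruence subgroup of an arithmetic lattice in `PSL(2, ℂ)`. -/
  IsCongruenceArithmetic : Manifold → Prop
  /-- Rational surgery diagrams: a link diagram together with an assignment of an
  element of `ℚ ∪ {∞}` to some of the components of the link. -/
  SurgeryDiagram : Type
  /-- The underlying link diagram of a rational surgery diagram. -/
  underlyingDiagram : SurgeryDiagram → Diagram
  /-- `Presents S M` means that `M` is obtained from the exterior of the link of
  `S` by attaching solid tori along the labelled boundary components according
  to the labels, i.e. `S` is a rational surgery diagram for `M`. -/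
  Presents : SurgeryDiagram → Manifold → Prop
  /-- Finite graphs embedded in the 2-sphere. -/
  EmbeddedGraph : Type
  /-- The underlying abstract multigraph of an embedded graph. -/
  absGraph : EmbeddedGraph → FinMultigraph
  /-- The Morse width of a graph `G` embedded in `S²`: the minimum, over all
  Morse functions `f : S² → ℝ` that are generic with respect to `G` (critical
  points at distinct values, vertices at distinct values), of
  `max { |f⁻¹(t) ∩ G| : t ∈ ℝ }`. -/
  morseWidth : EmbeddedGraph → ℕ
  /-- The underlying 4-valent planar graph `G(D)`, regarded as a graph embedded
  in the diagram 2-sphere. -/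
  embGraphOf : Diagram → EmbeddedGraph
  absGraph_embGraphOf : ∀ D, absGraph (embGraphOf D) = graphOf D

namespace LinkTheory

/-- `L` is an alternating link: it admits an alternating diagram. -/
def IsAlternatingLink (T : LinkTheory) (L : T.Link) : Prop :=
  ∃ D, T.IsDiagramOf D L ∧ T.IsAlternating D

/-- `L` is a highly twisted link: it admits a twist-reduced highly twisted
diagram having no edge loops. -/
def IsHighlyTwistedLink (T : LinkTheory) (L : T.Link) : Prop :=
  ∃ D, T.IsDiagramOf D L ∧ T.IsHighlyTwisted D ∧ T.IsTwistReduced D ∧ T.HasNoEdgeLoops D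

/-- `m` is the lex-width of the link `L`: it is realised by a diagram of `L` and
is lexicographically minimal among the lex-widths of all diagrams of `L`. -/
def IsLexWidthOf (T : LinkTheory) (m : Multiset ℕ) (L : T.Link) : Prop :=
  (∃ D, T.IsDiagramOf D L ∧ T.lexWidthD D = m) ∧
  ∀ D, T.IsDiagramOf D L → MultisetLexLE m (T.lexWidthD D)

end LinkTheory


namespace PlanarWidth

lemma exists_log2 (F : ℝ × ℝ → ℂ) (hF : Continuous F) (h0 : ∀ x, F x ≠ 0) :
    ∃ L : ℝ × ℝ → ℂ, Continuous L ∧ ∀ x, Complex.exp (L x) = F x := by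
  obtain ⟨L, ⟨-, hL⟩, -⟩ := Complex.isCoveringMapOn_exp.existsUnique_continuousMap_lifts
    (A := ℝ × ℝ) ⟨F, hF⟩ (a₀ := (0, 0)) (e₀ := Complex.log (F (0, 0)))
    (by simp [Complex.exp_log (h0 _)]) (fun a => by simpa using h0 a)
  exact ⟨L, L.continuous, fun x => congrFun hL x⟩

lemma exists_log1 (F : ℝ → ℂ) (hF : Continuous F) (h0 : ∀ x, F x ≠ 0) :
    ∃ L : ℝ → ℂ, Continuous L ∧ ∀ x, Complex.exp (L x) = F x := by
  obtain ⟨L, hL, h⟩ := exists_log2 (fun x => F x.1) (by fun_prop) (fun x => h0 _)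
  exact ⟨fun x => L (x, 0), by fun_prop, fun x => h _⟩

lemma log_unique (l l' : ℝ → ℂ) (hl : Continuous l) (hl' : Continuous l') (c : ℂ)
    (h : ∀ s, Complex.exp (l s) = c * Complex.exp (l' s)) : l 1 - l 0 = l' 1 - l' 0 := by
  have hu := Complex.isCoveringMapOn_exp.existsUnique_continuousMap_lifts
    (A := ℝ) ⟨fun s => Complex.exp (l s), by fun_prop⟩ (a₀ := 0) (e₀ := l 0)
    (by simp) (fun a => by simp)
  have h1 := hu.unique (y₁ := ⟨l, hl⟩) (y₂ := ⟨fun s => l' s + (l 0 - l' 0), by fun_prop⟩)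
    ⟨rfl, rfl⟩ ⟨by simp, by
      funext s
      have := h 0
      simp only [Function.comp, ContinuousMap.coe_mk, Complex.exp_add, Complex.exp_sub, h s, this]
      field_simp⟩
  have h2 := DFunLike.congr_fun h1 (1 : ℝ)
  simp only [ContinuousMap.coe_mk] at h2
  rw [h2]; ring

lemma no_K5_drawing (p : Fin 5 → ℂ) (γ : Fin 5 → Fin 5 → ℝ → ℂ)
    (hc : ∀ i j, i ≠ j → Continuous (γ i j)) (h0 : ∀ i j, i ≠ j → γ i j 0 = p i)
    (h1 : ∀ i j, i ≠ j → γ i j 1 = p j)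
    (hd : ∀ i j k l, i ≠ j → k ≠ l → i ≠ k → i ≠ l → j ≠ k → j ≠ l → ∀ s t, γ i j s ≠ γ k l t) :
    False := by
  have hex : ∀ i j k : Fin 5, i ≠ j → i ≠ k → j ≠ k →
      ∃ l : Fin 5, l ≠ i ∧ l ≠ j ∧ l ≠ k := by decide
  have hex3 : ∀ i j : Fin 5, i ≠ j → ∃ k : Fin 5, k ≠ i ∧ k ≠ j := by decide
  have hpt : ∀ i j k, i ≠ j → i ≠ k → j ≠ k → ∀ s, γ i j s - p k ≠ 0 := by
    intro i j k hij hik hjk s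
    obtain ⟨l, a, b, c⟩ := hex i j k hij hik hjk
    rw [← h0 k l c.symm]
    exact sub_ne_zero.2 (hd i j k l hij c.symm hik a.symm hjk b.symm s 0)
  have hpp : ∀ i j, i ≠ j → p j - p i ≠ 0 := by
    intro i j hij
    obtain ⟨k, a, b⟩ := hex3 i j hij
    rw [← h0 j k b.symm]
    exact hpt j k i b.symm hij.symm a 0
  have hlift : ∀ i j k, ∃ L : ℝ → ℂ, (i ≠ j → i ≠ k → j ≠ k →
      Continuous L ∧ ∀ s, Complex.exp (L s) = γ i j s - p k) := by
    intro i j k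
    by_cases h : i ≠ j ∧ i ≠ k ∧ j ≠ k
    · obtain ⟨L, a, b⟩ := exists_log1 (fun s => γ i j s - p k) ((hc i j h.1).sub continuous_const)
        (hpt i j k h.1 h.2.1 h.2.2)
      exact ⟨L, fun _ _ _ => ⟨a, b⟩⟩
    · exact ⟨0, fun a b c => absurd ⟨a, b, c⟩ h⟩
  choose ℓ hℓ using hlift
  let a : Fin 5 → Fin 5 → ℂ := fun u v =>
    if u < v then Complex.log (p v - p u) else Complex.log (p u - p v) + Real.pi * Complex.I
  let sg : Fin 5 → Fin 5 → ℤ := fun u v => if u < v then 1 else -1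
  have ha : ∀ u v, u ≠ v → Complex.exp (a u v) = p v - p u := by
    intro u v huv
    simp only [a]
    split_ifs
    · exact Complex.exp_log (hpp u v huv)
    · rw [Complex.exp_add, Complex.exp_log (hpp v u huv.symm), Complex.exp_pi_mul_I]; ring
  have has : ∀ u v, u ≠ v → a v u - a u v = (sg u v : ℂ) * (Real.pi * Complex.I) := by
    intro u v huv
    rcases lt_or_gt_of_ne huv with h | h
    · simp [a, sg, h, h.not_gt]
    · simp [a, sg, h, h.not_gt]
  have hN : ∀ i j k, ∃ n : ℤ, (i ≠ j → i ≠ k → j ≠ k →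
      ℓ i j k 1 - ℓ i j k 0 = a k j - a k i + n * (2 * Real.pi * Complex.I)) := by
    intro i j k
    by_cases h : i ≠ j ∧ i ≠ k ∧ j ≠ k
    · obtain ⟨hij, hik, hjk⟩ := h
      obtain ⟨_, e⟩ := hℓ i j k hij hik hjk
      have e1 : Complex.exp (ℓ i j k 1 - ℓ i j k 0) = Complex.exp (a k j - a k i) := by
        rw [Complex.exp_sub, Complex.exp_sub, e, e, ha _ _ hjk.symm, ha _ _ hik.symm, h0 _ _ hij,
          h1 _ _ hij]
      obtain ⟨n, hn⟩ := Complex.exp_eq_exp_iff_exists_int.1 e1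
      exact ⟨n, fun _ _ _ => hn⟩
    · exact ⟨0, fun a b c => absurd ⟨a, b, c⟩ h⟩
  choose N hN using hN
  have key : ∀ i j k l, i ≠ j → k ≠ l → i ≠ k → i ≠ l → j ≠ k → j ≠ l →
      2 * (N i j k - N i j l + N k l j - N k l i) + (sg j k - sg i k - sg j l + sg i l) = 0 := by
    intro i j k l hij hkl hik hil hjk hjl
    obtain ⟨L, hLc, hL⟩ := exists_log2 (fun x => γ i j x.1 - γ k l x.2)
      (((hc i j hij).comp continuous_fst).sub ((hc k l hkl).comp continuous_snd))
      (fun x => sub_ne_zero.2 (hd i j k l hij hkl hik hil hjk hjl _ _))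
    obtain ⟨c1, e1⟩ := hℓ i j k hij hik hjk
    obtain ⟨c2, e2⟩ := hℓ i j l hij hil hjl
    obtain ⟨c3, e3⟩ := hℓ k l j hkl hjk.symm hjl.symm
    obtain ⟨c4, e4⟩ := hℓ k l i hkl hik.symm hil.symm
    have d1 := log_unique (fun s => L (s, 0)) (ℓ i j k) (by fun_prop) c1 1
      (fun s => by simp only [hL, e1, h0 k l hkl]; ring)
    have d2 := log_unique (fun s => L (s, 1)) (ℓ i j l) (by fun_prop) c2 1
      (fun s => by simp only [hL, e2, h1 k l hkl]; ring)
    have d3 := log_unique (fun s => L (1, s)) (ℓ k l j) (by fun_prop) c3 (-1)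
      (fun s => by simp only [hL, e3, h1 i j hij]; ring)
    have d4 := log_unique (fun s => L (0, s)) (ℓ k l i) (by fun_prop) c4 (-1)
      (fun s => by simp only [hL, e4, h0 i j hij]; ring)
    rw [hN i j k hij hik hjk] at d1
    rw [hN i j l hij hil hjl] at d2
    rw [hN k l j hkl hjk.symm hjl.symm] at d3
    rw [hN k l i hkl hik.symm hil.symm] at d4
    have s1 := has j k hjk
    have s2 := has i k hik
    have s3 := has j l hjl
    have s4 := has i l hil
    have hpi : (Real.pi * Complex.I : ℂ) ≠ 0 := by
      simp [Real.pi_ne_zero]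
    have : ((2 * (N i j k - N i j l + N k l j - N k l i) + (sg j k - sg i k - sg j l + sg i l) : ℤ) : ℂ)
        * (Real.pi * Complex.I) = 0 := by
      push_cast
      linear_combination (-1 : ℂ) * d1 + d2 - d3 + d4 - s1 + s2 + s3 - s4
    have := (mul_eq_zero.1 this).resolve_right hpi
    exact_mod_cast this
  have K := fun i j k l (h : i ≠ j ∧ k ≠ l ∧ i ≠ k ∧ i ≠ l ∧ j ≠ k ∧ j ≠ l) =>
    key i j k l h.1 h.2.1 h.2.2.1 h.2.2.2.1 h.2.2.2.2.1 h.2.2.2.2.2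
  have k1 := K 0 1 2 3 (by decide)
  have k2 := K 0 2 1 3 (by decide)
  have k3 := K 0 3 1 2 (by decide)
  have k4 := K 0 1 2 4 (by decide)
  have k5 := K 0 2 1 4 (by decide)
  have k6 := K 0 4 1 2 (by decide)
  have k7 := K 0 1 3 4 (by decide)
  have k8 := K 0 3 1 4 (by decide)
  have k9 := K 0 4 1 3 (by decide)
  have k10 := K 0 2 3 4 (by decide)
  have k11 := K 0 3 2 4 (by decide)
  have k12 := K 0 4 2 3 (by decide)
  have k13 := K 1 2 3 4 (by decide)
  have k14 := K 1 3 2 4 (by decide)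
  have k15 := K 1 4 2 3 (by decide)
  clear K key
  simp [sg] at k1 k2 k3 k4 k5 k6 k7 k8 k9 k10 k11 k12 k13 k14 k15
  omega

end PlanarWidth


set_option linter.unusedSectionVars false

namespace PlanarWidth

open Finset Relation

section comb
variable {V : Type} [DecidableEq V]

/-- one step along an adjacency inside `U` -/
def Step (Adj : V → V → Prop) (U : Finset V) (a b : V) : Prop := Adj a b ∧ b ∈ U

/-- `C` is non-empty and connected -/
def Conn (Adj : V → V → Prop) (C : Finset V) : Prop :=
  C.Nonempty ∧ ∀ x ∈ C, ∀ y ∈ C, ReflTransGen (Step Adj C) x y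

lemma reach_mono {Adj : V → V → Prop} {U U' : Finset V} (h : U ⊆ U') {x y : V}
    (hr : ReflTransGen (Step Adj U) x y) : ReflTransGen (Step Adj U') x y :=
  ReflTransGen.mono (p := Step Adj U') (fun _ _ hab => ⟨hab.1, h hab.2⟩) _ _ hr

lemma reach_symm {Adj : V → V → Prop} (hs : ∀ a b, Adj a b → Adj b a) {U : Finset V} {x y : V}
    (hx : x ∈ U) (hr : ReflTransGen (Step Adj U) x y) :
    y ∈ U ∧ ReflTransGen (Step Adj U) y x := by
  induction hr with
  | refl => exact ⟨hx, .refl⟩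
  | tail _ h ih => exact ⟨h.2, ReflTransGen.head ⟨hs _ _ h.1, ih.1⟩ ih.2⟩

lemma conn_of_root {Adj : V → V → Prop} (hs : ∀ a b, Adj a b → Adj b a) {C : Finset V} {c : V}
    (hc : c ∈ C) (h : ∀ y ∈ C, ReflTransGen (Step Adj C) c y) : Conn Adj C :=
  ⟨⟨c, hc⟩, fun x hx y hy => (reach_symm hs hc (h x hx)).2.trans (h y hy)⟩

lemma conn_singleton {Adj : V → V → Prop} (c : V) : Conn Adj {c} := by
  refine ⟨⟨c, by simp⟩, fun x hx y hy => ?_⟩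
  simp only [mem_singleton] at hx hy
  subst hx; subst hy; exact .refl

lemma conn_insert {Adj : V → V → Prop} (hs : ∀ a b, Adj a b → Adj b a) {T : Finset V}
    (hT : Conn Adj T) {x y : V} (hx : x ∈ T) (hxy : Adj x y) : Conn Adj (insert y T) := by
  refine conn_of_root hs (c := x) (by simp [hx]) fun z hz => ?_
  rcases mem_insert.1 hz with rfl | hz
  · exact .single ⟨hxy, by simp⟩
  · exact reach_mono (subset_insert _ _) (hT.2 x hx z hz)

open Classical in
/-- the connected component of `v` in `U` -/
noncomputable def comp (Adj : V → V → Prop) (U : Finset V) (v : V) : Finset V :=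
  U.filter fun x => ReflTransGen (Step Adj U) v x

lemma comp_closed {Adj : V → V → Prop} {U : Finset V} {v x y : V}
    (hx : x ∈ comp Adj U v) (h : Adj x y) (hy : y ∈ U) : y ∈ comp Adj U v := by
  classical
  simp only [comp, mem_filter] at hx ⊢
  exact ⟨hy, hx.2.tail ⟨h, hy⟩⟩

lemma comp_subset {Adj : V → V → Prop} {U : Finset V} {v : V} : comp Adj U v ⊆ U := by
  classical
  exact filter_subset _ _

lemma mem_comp_self {Adj : V → V → Prop} {U : Finset V} {v : V} (hv : v ∈ U) :
    v ∈ comp Adj U v := by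
  classical
  simp only [comp, mem_filter]
  exact ⟨hv, .refl⟩

lemma reach_comp {Adj : V → V → Prop} {U : Finset V} {v y : V} (hv : v ∈ U)
    (hr : ReflTransGen (Step Adj U) v y) :
    y ∈ comp Adj U v ∧ ReflTransGen (Step Adj (comp Adj U v)) v y := by
  induction hr with
  | refl => exact ⟨mem_comp_self hv, .refl⟩
  | tail _ h ih =>
    have := comp_closed ih.1 h.1 h.2
    exact ⟨this, ih.2.tail ⟨h.1, this⟩⟩

lemma comp_conn {Adj : V → V → Prop} (hs : ∀ a b, Adj a b → Adj b a) {U : Finset V} {v : V}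
    (hv : v ∈ U) : Conn Adj (comp Adj U v) := by
  refine conn_of_root hs (mem_comp_self hv) fun y hy => ?_
  classical
  have hy' := hy
  simp only [comp, mem_filter] at hy'
  exact (reach_comp hv hy'.2).2

/-- a connected set stays in any set closed under steps inside it -/
lemma conn_stay {Adj : V → V → Prop} {K : Finset V} (hK : Conn Adj K) (P : V → Prop)
    {x : V} (hx : x ∈ K) (hPx : P x)
    (h : ∀ a ∈ K, ∀ b ∈ K, P a → Adj a b → P b) : ∀ y ∈ K, P y := by
  intro y hy
  have hr := hK.2 x hx y hy
  suffices y ∈ K ∧ P y from this.2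
  clear hy
  induction hr with
  | refl => exact ⟨hx, hPx⟩
  | tail _ hs ih => exact ⟨hs.2, h _ ih.1 _ hs.2 ih.2 hs.1⟩

lemma conn_to_comp {Adj : V → V → Prop} (hs : ∀ a b, Adj a b → Adj b a) {U K : Finset V}
    (hK : Conn Adj K) (hKU : K ⊆ U) :
    ∃ K', Conn Adj K' ∧ K ⊆ K' ∧ K' ⊆ U ∧ ∀ x ∈ K', ∀ y ∈ U, Adj x y → y ∈ K' := by
  obtain ⟨v, hv⟩ := hK.1
  refine ⟨comp Adj U v, comp_conn hs (hKU hv), ?_, comp_subset, fun x hx y hy h =>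
    comp_closed hx h hy⟩
  exact conn_stay hK (· ∈ comp Adj U v) hv (mem_comp_self (hKU hv))
    fun a _ b hb ha hab => comp_closed ha hab (hKU hb)

open Classical in
lemma ast4 {Adj : V → V → Prop} (hs : ∀ a b, Adj a b → Adj b a) (B : Finset V)
    (A : Fin 4 → Finset V) (t : ℕ) :
    (∃ T ⊆ B, Conn Adj T ∧ T.card ≤ t ∧ ∀ i, ∃ x ∈ T, x ∈ A i) ∨
    (∃ Z ⊆ B, Z.card * (t + 1) ≤ 3 * B.card ∧
      ∀ K, Conn Adj K → K ⊆ B → Disjoint K Z → ∃ i, ∀ x ∈ K, x ∉ A i) := by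
  by_contra hcon
  push Not at hcon
  obtain ⟨hT, hZ⟩ := hcon
  let P : ℕ → V × Fin 3 → Prop := fun s xi =>
    ∃ T ⊆ B, Conn Adj T ∧ xi.1 ∈ T ∧ T.card ≤ s ∧ ∀ j : Fin 3, j ≤ xi.2 → ∃ x ∈ T, x ∈ A j.castSucc
  let D : ℕ → Finset (V × Fin 3) := fun s => (B ×ˢ univ).filter (P s)
  have hmem : ∀ s xi, xi ∈ D s ↔ xi.1 ∈ B ∧ P s xi := by
    intro s xi; simp [D, mem_product]
  have hmono : ∀ s s', s ≤ s' → D s ⊆ D s' := by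
    intro s s' h xi hxi
    rw [hmem] at hxi ⊢
    obtain ⟨a, T, b, c, d, e, f⟩ := hxi
    exact ⟨a, T, b, c, d, e.trans h, f⟩
  have hlayer : ∃ s < t + 1, (D (s + 1) \ D s).card * (t + 1) ≤ 3 * B.card := by
    by_contra hno
    push Not at hno
    have hsum : ∀ m, ∑ s ∈ range m, (D (s + 1) \ D s).card ≤ (D m).card := by
      intro m
      induction m with
      | zero => simp
      | succ m ih =>
        rw [sum_range_succ]
        have := card_sdiff_add_card_eq_card (hmono m (m + 1) (by omega))
        omega
    have h1 := hsum (t + 1)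
    have h2 : (D (t + 1)).card ≤ 3 * B.card := by
      refine (card_filter_le _ _).trans ?_
      rw [card_product]; simp [mul_comm]
    have h3 : ∑ s ∈ range (t + 1), 3 * B.card < ∑ s ∈ range (t + 1), (D (s + 1) \ D s).card * (t + 1) :=
      sum_lt_sum_of_nonempty (by simp) fun s hs => hno s (mem_range.1 hs)
    rw [sum_const, card_range, smul_eq_mul, ← Finset.sum_mul] at h3
    have h4 := Nat.mul_le_mul_right (t + 1) (h1.trans h2)
    nlinarith
  obtain ⟨s, hst, hcard⟩ := hlayer
  obtain ⟨K, hK, hKB, hKZ, hKA⟩ := hZ ((D (s + 1) \ D s).image Prod.fst) (by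
    intro x hx
    obtain ⟨y, hy, rfl⟩ := mem_image.1 hx
    exact ((hmem _ _).1 (mem_sdiff.1 hy).1).1)
    ((Nat.mul_le_mul_right _ card_image_le).trans hcard)
  have hstay : ∀ x ∈ K, ∀ i, (x, i) ∈ D (s + 1) → (x, i) ∈ D s := by
    intro x hx i h
    by_contra hn
    exact (disjoint_left.1 hKZ hx) (mem_image.2 ⟨(x, i), mem_sdiff.2 ⟨h, hn⟩, rfl⟩)
  have hwalk : ∀ i : Fin 3, ∀ x ∈ K, (x, i) ∈ D s → ∀ y ∈ K, (y, i) ∈ D s := by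
    intro i x hx hxi
    refine conn_stay hK (fun y => (y, i) ∈ D s) hx hxi fun a _ b hb hai hab => hstay b hb i ?_
    rw [hmem] at hai ⊢
    obtain ⟨_, T, b1, c, d, e, f⟩ := hai
    refine ⟨hKB hb, insert b T, insert_subset (hKB hb) b1, conn_insert hs c d hab, by simp,
      (card_insert_le _ _).trans (by omega), fun j hj => ?_⟩
    obtain ⟨z, hz, hz'⟩ := f j hj
    exact ⟨z, by simp [hz], hz'⟩
  obtain ⟨a0, k0, h0⟩ := hKA 0
  obtain ⟨a1, k1, h1⟩ := hKA 1
  obtain ⟨a2, k2, h2⟩ := hKA 2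
  obtain ⟨a3, k3, h3⟩ := hKA 3
  have e0 : (a0, (0 : Fin 3)) ∈ D s := by
    refine hstay _ k0 _ ?_
    rw [hmem]
    refine ⟨hKB k0, {a0}, by simpa using hKB k0, conn_singleton _, by simp, by simp, fun j hj => ?_⟩
    have : j = 0 := by simpa using hj
    subst this
    exact ⟨a0, by simp, h0⟩
  have up : ∀ (i i' : Fin 3) x, (∀ j, j ≤ i' → j ≤ i ∨ j = i') → x ∈ A i'.castSucc →
      (x, i) ∈ D s → (x, i') ∈ D s := by
    intro i i' x hii hx hxi
    rw [hmem] at hxi ⊢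
    obtain ⟨a, T, b1, c, d, e, f⟩ := hxi
    refine ⟨a, T, b1, c, d, e, fun j hj => ?_⟩
    rcases hii j hj with h | rfl
    · exact f j h
    · exact ⟨x, d, hx⟩
  have e1 := up 0 1 a1 (by decide) h1 (hwalk 0 a0 k0 e0 a1 k1)
  have e2 := up 1 2 a2 (by decide) h2 (hwalk 1 a1 k1 e1 a2 k2)
  have e3 := hwalk 2 a2 k2 e2 a3 k3
  rw [hmem] at e3
  obtain ⟨_, T, b1, c, d, e, f⟩ := e3
  obtain ⟨i, hi⟩ := hT T b1 c (by omega)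
  have : i = 3 ∨ ∃ j : Fin 3, j ≤ 2 ∧ i = j.castSucc := by clear hi; revert i; decide
  rcases this with rfl | ⟨j, hj, rfl⟩
  · exact hi a3 d h3
  · obtain ⟨x, hx, hx'⟩ := f j hj
    exact hi x hx hx'

/-- a `K₅` minor model -/
def K5Model (Adj : V → V → Prop) (C : Fin 5 → Finset V) : Prop :=
  (∀ i, Conn Adj (C i)) ∧ (∀ i j, i ≠ j → Disjoint (C i) (C j)) ∧
    ∀ i j, i ≠ j → ∃ x ∈ C i, ∃ y ∈ C j, Adj x y

/-- the state in the Alon-Seymour-Thomas argument -/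
structure St (Adj : V → V → Prop) (W : Finset V) (r : ℝ) (I : Finset (Fin 4))
    (C : Fin 4 → Finset V) (B X : Finset V) : Prop where
  hBW : B ⊆ W
  hbig : W.card < 2 * B.card
  conn : ∀ i ∈ I, Conn Adj (C i)
  disj : ∀ i ∈ I, ∀ j ∈ I, i ≠ j → Disjoint (C i) (C j)
  adj : ∀ i ∈ I, ∀ j ∈ I, i ≠ j → ∃ x ∈ C i, ∃ y ∈ C j, Adj x y
  disjB : ∀ i ∈ I, Disjoint (C i) B
  X_sub : ∀ x ∈ X, ∃ i ∈ I, x ∈ C i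
  bdry : ∀ b ∈ B, ∀ y ∈ W, Adj b y → y ∈ B ∨ y ∈ X
  small : ∀ i ∈ I, ((X ∩ C i).card : ℝ) ≤ r

theorem separator {Adj : V → V → Prop} (hs : ∀ a b, Adj a b → Adj b a)
    (hno : ¬ ∃ C, K5Model Adj C) (W : Finset V) :
    ∃ S ⊆ W, (S.card : ℝ) ≤ 5 * (√3 * √(W.card : ℝ)) ∧
      ∀ K, Conn Adj K → K ⊆ W → Disjoint K S → 2 * K.card ≤ W.card := by
  classical
  by_contra hcon
  push Not at hcon
  set r : ℝ := √3 * √(W.card : ℝ) with hr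
  have hr0 : 0 ≤ r := by positivity
  have hrr : r * r = 3 * W.card := by
    rw [hr]
    have h3 := Real.mul_self_sqrt (show (0 : ℝ) ≤ 3 by norm_num)
    have hW := Real.mul_self_sqrt (show (0 : ℝ) ≤ (W.card : ℝ) by positivity)
    calc √3 * √(W.card : ℝ) * (√3 * √(W.card : ℝ)) = (√3 * √3) * (√(W.card : ℝ) * √(W.card : ℝ)) := by ring
      _ = _ := by rw [h3, hW]
  have big : ∀ S : Finset V, (S.card : ℝ) ≤ 5 * r → ∃ K, Conn Adj K ∧ K ⊆ W ∧ Disjoint K S ∧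
      (∀ x ∈ K, ∀ y ∈ W, y ∉ S → Adj x y → y ∈ K) ∧ W.card < 2 * K.card := by
    intro S hS
    obtain ⟨K, h1, h2, h3, h4⟩ := hcon (S ∩ W) inter_subset_right
      (le_trans (by exact_mod_cast card_le_card inter_subset_left) hS)
    obtain ⟨K', a, b, c, d⟩ := conn_to_comp hs h1 (U := W \ S) (by
      intro x hx
      have := disjoint_left.1 h3 hx
      simp only [mem_inter, not_and] at this
      exact mem_sdiff.2 ⟨h2 hx, fun h => this h (h2 hx)⟩)
    refine ⟨K', a, c.trans sdiff_subset, ?_, ?_, lt_of_lt_of_le h4 (by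
      have := card_le_card b; omega)⟩
    · exact disjoint_left.2 fun x hx => (mem_sdiff.1 (c hx)).2
    · exact fun x hx y hy hyS h => d x hx y (mem_sdiff.2 ⟨hy, hyS⟩) h
  have main : ∀ m : ℕ, ∀ I C B X, St Adj W r I C B X → 2 * B.card + I.card = m → False := by
    intro m
    induction m using Nat.strong_induction_on with
    | _ m ih =>
    intro I C B X st hm
    have hXcard : (X.card : ℝ) ≤ I.card * r := by
      have h1 : X ⊆ I.biUnion fun i => X ∩ C i := by
        intro x hx
        obtain ⟨i, hi, hxi⟩ := st.X_sub x hx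
        exact mem_biUnion.2 ⟨i, hi, mem_inter.2 ⟨hx, hxi⟩⟩
      have h2 : X.card ≤ ∑ i ∈ I, (X ∩ C i).card := (card_le_card h1).trans card_biUnion_le
      calc (X.card : ℝ) ≤ ∑ i ∈ I, ((X ∩ C i).card : ℝ) := by exact_mod_cast h2
        _ ≤ ∑ i ∈ I, r := sum_le_sum fun i hi => st.small i hi
        _ = I.card * r := by simp
    have hI4 : I.card ≤ 4 := by simpa using card_le_univ I
    have hX4 : (X.card : ℝ) ≤ 4 * r := by
      refine hXcard.trans ?_
      have : (I.card : ℝ) ≤ 4 := by exact_mod_cast hI4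
      gcongr
    have hXB : Disjoint X B := disjoint_left.2 fun x hx hxB => by
      obtain ⟨i, hi, hxi⟩ := st.X_sub x hx
      exact disjoint_left.1 (st.disjB i hi) hxi hxB
    -- a big connected set avoiding `X` lies in `B`
    have inB : ∀ K, Conn Adj K → K ⊆ W → Disjoint K X → W.card < 2 * K.card → K ⊆ B := by
      intro K hK hKW hKX hKb
      have hne : ∃ x ∈ K, x ∈ B := by
        by_contra hn
        push Not at hn
        have := card_le_card (union_subset hKW st.hBW)
        rw [card_union_of_disjoint (disjoint_left.2 hn)] at this
        have := st.hbig
        omega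
      obtain ⟨x, hxK, hxB⟩ := hne
      refine conn_stay hK (· ∈ B) hxK hxB fun a _ b hb ha hab => ?_
      exact (st.bdry a ha b (hKW hb) hab).resolve_right (disjoint_left.1 hKX hb)
    let A : Fin 4 → Finset V := fun i =>
      if i ∈ I then B.filter (fun b => ∃ x ∈ C i, Adj x b) else B
    by_cases hdrop : ∃ i ∈ I, A i = ∅
    · obtain ⟨i, hi, hAi⟩ := hdrop
      simp only [A, hi, if_true] at hAi
      have hcard := card_erase_lt_of_mem hi
      refine ih (2 * B.card + (I.erase i).card) (by omega) (I.erase i) C B (X \ C i)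
        ⟨st.hBW, st.hbig, fun j hj => st.conn j (mem_of_mem_erase hj),
          fun j hj k hk => st.disj j (mem_of_mem_erase hj) k (mem_of_mem_erase hk),
          fun j hj k hk => st.adj j (mem_of_mem_erase hj) k (mem_of_mem_erase hk),
          fun j hj => st.disjB j (mem_of_mem_erase hj), ?_, ?_, ?_⟩ rfl
      · intro x hx
        obtain ⟨hx1, hx2⟩ := mem_sdiff.1 hx
        obtain ⟨j, hj, hxj⟩ := st.X_sub x hx1
        refine ⟨j, mem_erase.2 ⟨?_, hj⟩, hxj⟩
        rintro rfl; exact hx2 hxj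
      · intro b hb y hy h
        refine (st.bdry b hb y hy h).imp id fun hyX => mem_sdiff.2 ⟨hyX, fun hyC => ?_⟩
        have : b ∈ B.filter (fun b => ∃ x ∈ C i, Adj x b) := mem_filter.2 ⟨hb, y, hyC, hs _ _ h⟩
        rw [hAi] at this
        simp at this
      · intro j hj
        refine le_trans ?_ (st.small j (mem_of_mem_erase hj))
        exact_mod_cast card_le_card (inter_subset_inter_right sdiff_subset)
    push Not at hdrop
    rcases ast4 hs B A ⌊r⌋₊ with ⟨T, hTB, hTc, hTcard, hTA⟩ | ⟨Z, hZB, hZcard, hZ⟩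
    · have hTr : (T.card : ℝ) ≤ r := (Nat.cast_le.2 hTcard).trans (Nat.floor_le hr0)
      have hTadj : ∀ i ∈ I, ∃ x ∈ C i, ∃ y ∈ T, Adj x y := by
        intro i hi
        obtain ⟨y, hyT, hyA⟩ := hTA i
        simp only [A, hi, if_true, mem_filter] at hyA
        obtain ⟨_, x, hx, hxy⟩ := hyA
        exact ⟨x, hx, y, hyT, hxy⟩
      have hTdis : ∀ i ∈ I, Disjoint (C i) T := fun i hi => (st.disjB i hi).mono_right hTB
      by_cases hIu : ∀ i, i ∈ I
      · apply hno
        refine ⟨Fin.cons T C, ?_, ?_, ?_⟩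
        · intro i
          refine Fin.cases ?_ (fun i => ?_) i
          · exact hTc
          · exact st.conn i (hIu i)
        · intro i j
          refine Fin.cases ?_ (fun i => ?_) i <;> refine Fin.cases ?_ (fun j => ?_) j
          · intro h; exact absurd rfl h
          · intro _; exact (hTdis j (hIu j)).symm
          · intro _; exact hTdis i (hIu i)
          · intro h; exact st.disj i (hIu i) j (hIu j) (fun h' => h (by rw [h']))
        · intro i j
          refine Fin.cases ?_ (fun i => ?_) i <;> refine Fin.cases ?_ (fun j => ?_) j
          · intro h; exact absurd rfl h
          · intro _
            obtain ⟨x, hx, y, hy, h⟩ := hTadj j (hIu j)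
            exact ⟨y, hy, x, hx, hs _ _ h⟩
          · intro _; exact hTadj i (hIu i)
          · intro h; exact st.adj i (hIu i) j (hIu j) (fun h' => h (by rw [h']))
      push Not at hIu
      obtain ⟨j, hj⟩ := hIu
      obtain ⟨K, hK, hKW, hKS, hKcl, hKbig⟩ := big (X ∪ T) (by
        have : ((X ∪ T).card : ℝ) ≤ X.card + T.card := by exact_mod_cast card_union_le X T
        linarith)
      have hKX : Disjoint K X := hKS.mono_right subset_union_left
      have hKT : Disjoint K T := hKS.mono_right subset_union_right
      have hKB := inB K hK hKW hKX hKbig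
      have hlt : K.card + T.card ≤ B.card := by
        rw [← card_union_of_disjoint hKT]
        exact card_le_card (union_subset hKB hTB)
      have hT0 := hTc.1.card_pos
      have hne : ∀ i ∈ I, i ≠ j := fun i hi h => hj (h ▸ hi)
      have hup : ∀ i ∈ I, Function.update C j T i = C i := fun i hi =>
        Function.update_of_ne (hne i hi) _ _
      have hupj : Function.update C j T j = T := Function.update_self _ _ _
      refine ih (2 * K.card + (insert j I).card) (by rw [card_insert_of_notMem hj]; omega)
        (insert j I) (Function.update C j T) K (X ∪ T) ⟨hKW, hKbig, ?_, ?_, ?_, ?_, ?_, ?_, ?_⟩ rfl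
      · intro i hi
        rcases mem_insert.1 hi with rfl | hi
        · rwa [hupj]
        · rw [hup i hi]; exact st.conn i hi
      · intro i hi k hk hik
        rcases mem_insert.1 hi with rfl | hi' <;> rcases mem_insert.1 hk with rfl | hk'
        · exact absurd rfl hik
        · rw [hupj, hup k hk']; exact (hTdis k hk').symm
        · rw [hupj, hup i hi']; exact hTdis i hi'
        · rw [hup i hi', hup k hk']; exact st.disj i hi' k hk' hik
      · intro i hi k hk hik
        rcases mem_insert.1 hi with rfl | hi' <;> rcases mem_insert.1 hk with rfl | hk'
        · exact absurd rfl hik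
        · rw [hupj, hup k hk']
          obtain ⟨x, hx, y, hy, h⟩ := hTadj k hk'
          exact ⟨y, hy, x, hx, hs _ _ h⟩
        · rw [hupj, hup i hi']; exact hTadj i hi'
        · rw [hup i hi', hup k hk']; exact st.adj i hi' k hk' hik
      · intro i hi
        rcases mem_insert.1 hi with rfl | hi
        · rw [hupj]; exact hKT.symm
        · rw [hup i hi]; exact (st.disjB i hi).mono_right hKB
      · intro x hx
        rcases mem_union.1 hx with hx | hx
        · obtain ⟨i, hi, hxi⟩ := st.X_sub x hx
          exact ⟨i, mem_insert_of_mem hi, by rwa [hup i hi]⟩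
        · exact ⟨j, mem_insert_self _ _, by rwa [hupj]⟩
      · intro b hb y hy h
        by_cases hyS : y ∈ X ∪ T
        · exact .inr hyS
        · exact .inl (hKcl b hb y hy hyS h)
      · intro i hi
        rcases mem_insert.1 hi with rfl | hi
        · rw [hupj]
          refine le_trans ?_ hTr
          exact_mod_cast card_le_card inter_subset_right
        · rw [hup i hi]
          refine le_trans ?_ (st.small i hi)
          refine Nat.cast_le.2 (card_le_card ?_)
          intro x hx
          obtain ⟨h1, h2⟩ := mem_inter.1 hx
          refine mem_inter.2 ⟨(mem_union.1 h1).resolve_right fun hxT => ?_, h2⟩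
          exact disjoint_left.1 (hTdis i hi) h2 hxT
    · have hZr : (Z.card : ℝ) ≤ r := by
        have h1 : (Z.card : ℝ) * (⌊r⌋₊ + 1) ≤ 3 * W.card := by
          have := hZcard.trans (Nat.mul_le_mul_left 3 (card_le_card st.hBW))
          exact_mod_cast this
        have h2 := Nat.lt_floor_add_one r
        by_contra hlt
        push Not at hlt
        nlinarith
      obtain ⟨K, hK, hKW, hKS, hKcl, hKbig⟩ := big (X ∪ Z) (by
        have : ((X ∪ Z).card : ℝ) ≤ X.card + Z.card := by exact_mod_cast card_union_le X Z
        linarith)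
      have hKX : Disjoint K X := hKS.mono_right subset_union_left
      have hKZ : Disjoint K Z := hKS.mono_right subset_union_right
      have hKB := inB K hK hKW hKX hKbig
      obtain ⟨i, hiK⟩ := hZ K hK hKB hKZ
      have hi : i ∈ I := by
        by_contra hi
        obtain ⟨x, hx⟩ := hK.1
        have := hiK x hx
        simp only [A, hi, if_false] at this
        exact this (hKB hx)
      have hAi : A i = B.filter (fun b => ∃ x ∈ C i, Adj x b) := by simp only [A, hi, if_true]
      obtain ⟨a0, ha0⟩ := hdrop i hi
      -- vertices reachable from `A i` in `B \ K`
      let D : Finset V := (B \ K).filter fun d => ∃ a ∈ A i, ReflTransGen (Step Adj (B \ K)) a d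
      have hAD : A i ⊆ D := by
        intro a ha
        have ha' := ha
        rw [hAi] at ha'
        refine mem_filter.2 ⟨mem_sdiff.2 ⟨(mem_filter.1 ha').1, fun h => hiK a h ha⟩, a, ha, .refl⟩
      have hDB : D ⊆ B := (filter_subset _ _).trans sdiff_subset
      have hDK : ∀ d ∈ D, d ∉ K := fun d hd => (mem_sdiff.1 (mem_filter.1 hd).1).2
      have hDcl : ∀ d ∈ D, ∀ b ∈ B, b ∉ D → Adj d b → b ∈ K := by
        intro d hd b hb hbD h
        by_contra hbK
        obtain ⟨_, a, ha, hr⟩ := mem_filter.1 hd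
        exact hbD (mem_filter.2 ⟨mem_sdiff.2 ⟨hb, hbK⟩, a, ha, hr.tail ⟨h, mem_sdiff.2 ⟨hb, hbK⟩⟩⟩)
      have hDZ : ∀ d ∈ D, ∀ b ∈ B, b ∉ D → Adj d b → d ∈ Z := by
        intro d hd b hb hbD h
        have hbK := hDcl d hd b hb hbD h
        by_contra hdZ
        refine hDK d hd (hKcl b hbK d (st.hBW (hDB hd)) ?_ (hs _ _ h))
        rw [mem_union, not_or]
        exact ⟨fun h => disjoint_left.1 hXB h (hDB hd), hdZ⟩
      have hKD : K ⊆ B \ D := fun x hx => mem_sdiff.2 ⟨hKB hx, fun h => hDK x h hx⟩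
      have hBDlt : (B \ D).card < B.card := by
        refine card_lt_card ⟨sdiff_subset, fun h => ?_⟩
        exact (mem_sdiff.1 (h (hDB (hAD ha0)))).2 (hAD ha0)
      have hnew : Conn Adj (C i ∪ D) := by
        obtain ⟨c, hc⟩ := (st.conn i hi).1
        have hCi : ∀ y ∈ C i, ReflTransGen (Step Adj (C i ∪ D)) c y := fun y hy =>
          reach_mono subset_union_left ((st.conn i hi).2 c hc y hy)
        refine conn_of_root hs (c := c) (mem_union_left _ hc) fun y hy => ?_
        rcases mem_union.1 hy with hy' | hy'
        · exact hCi y hy'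
        · obtain ⟨-, a, ha, hr⟩ := mem_filter.1 hy'
          have haD := hAD ha
          have ha' := ha
          rw [hAi] at ha'
          obtain ⟨_, x, hx, hxa⟩ := mem_filter.1 ha'
          have hca : ReflTransGen (Step Adj (C i ∪ D)) c a :=
            (hCi x hx).tail ⟨hxa, mem_union_right _ haD⟩
          have : y ∈ D ∧ ReflTransGen (Step Adj (C i ∪ D)) c y := by
            clear hy hy'
            induction hr with
            | refl => exact ⟨haD, hca⟩
            | @tail u v huv hst ih2 =>
              have hv : v ∈ D := mem_filter.2 ⟨hst.2, a, ha, huv.tail hst⟩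
              exact ⟨hv, ih2.2.tail ⟨hst.1, mem_union_right _ hv⟩⟩
          exact this.2
      have hup : ∀ k, k ≠ i → Function.update C i (C i ∪ D) k = C k := fun k hk =>
        Function.update_of_ne hk _ _
      have hupi : Function.update C i (C i ∪ D) i = C i ∪ D := Function.update_self _ _ _
      have hdj : ∀ k ∈ I, k ≠ i → Disjoint (C i ∪ D) (C k) := fun k hk hki =>
        disjoint_union_left.2 ⟨st.disj i hi k hk hki.symm, ((st.disjB k hk).mono_right hDB).symm⟩
      refine ih (2 * (B \ D).card + I.card) (by omega) I (Function.update C i (C i ∪ D)) (B \ D)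
        ((X \ C i) ∪ (Z ∩ D)) ⟨sdiff_subset.trans st.hBW, ?_, ?_, ?_, ?_, ?_, ?_, ?_, ?_⟩ rfl
      · have := card_le_card hKD
        omega
      · intro k hk
        by_cases hki : k = i
        · subst hki; rwa [hupi]
        · rw [hup k hki]; exact st.conn k hk
      · intro k hk l hl hkl
        by_cases hki : k = i
        · subst hki; rw [hupi, hup l hkl.symm]; exact hdj l hl hkl.symm
        · by_cases hli : l = i
          · subst hli; rw [hupi, hup k hki]; exact (hdj k hk hki).symm
          · rw [hup k hki, hup l hli]; exact st.disj k hk l hl hkl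
      · intro k hk l hl hkl
        obtain ⟨x, hx, y, hy, h⟩ := st.adj k hk l hl hkl
        have hsub : ∀ k, C k ⊆ Function.update C i (C i ∪ D) k := by
          intro k
          by_cases hki : k = i
          · subst hki; rw [hupi]; exact subset_union_left
          · rw [hup k hki]
        exact ⟨x, hsub k hx, y, hsub l hy, h⟩
      · intro k hk
        by_cases hki : k = i
        · subst hki; rw [hupi]
          exact disjoint_union_left.2 ⟨(st.disjB k hk).mono_right sdiff_subset, disjoint_sdiff⟩
        · rw [hup k hki]; exact (st.disjB k hk).mono_right sdiff_subset
      · intro x hx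
        rcases mem_union.1 hx with hx | hx
        · obtain ⟨hx1, hx2⟩ := mem_sdiff.1 hx
          obtain ⟨k, hk, hxk⟩ := st.X_sub x hx1
          have hki : k ≠ i := by rintro rfl; exact hx2 hxk
          exact ⟨k, hk, by rwa [hup k hki]⟩
        · exact ⟨i, hi, by rw [hupi]; exact mem_union_right _ (mem_inter.1 hx).2⟩
      · intro b hb y hy h
        obtain ⟨hbB, hbD⟩ := mem_sdiff.1 hb
        rcases st.bdry b hbB y hy h with hyB | hyX
        · by_cases hyD : y ∈ D
          · exact .inr (mem_union_right _ (mem_inter.2 ⟨hDZ y hyD b hbB hbD (hs _ _ h), hyD⟩))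
          · exact .inl (mem_sdiff.2 ⟨hyB, hyD⟩)
        · refine .inr (mem_union_left _ (mem_sdiff.2 ⟨hyX, fun hyC => hbD (hAD ?_)⟩))
          rw [hAi]
          exact mem_filter.2 ⟨hbB, y, hyC, hs _ _ h⟩
      · intro k hk
        by_cases hki : k = i
        · subst hki; rw [hupi]
          refine le_trans (Nat.cast_le.2 (card_le_card ?_)) hZr
          intro x hx
          obtain ⟨h1, h2⟩ := mem_inter.1 hx
          rcases mem_union.1 h1 with h1 | h1
          · exfalso
            obtain ⟨hxX, hxC⟩ := mem_sdiff.1 h1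
            rcases mem_union.1 h2 with h2 | h2
            · exact hxC h2
            · exact disjoint_left.1 hXB hxX (hDB h2)
          · exact (mem_inter.1 h1).1
        · rw [hup k hki]
          refine le_trans (Nat.cast_le.2 (card_le_card ?_)) (st.small k hk)
          intro x hx
          obtain ⟨h1, h2⟩ := mem_inter.1 hx
          refine mem_inter.2 ⟨?_, h2⟩
          rcases mem_union.1 h1 with h1 | h1
          · exact (mem_sdiff.1 h1).1
          · exact absurd h2 (disjoint_left.1 (hdj k hk hki) (mem_union_right _ (mem_inter.1 h1).2))
  obtain ⟨K, -, hKW, -, hK⟩ := hcon ∅ (by simp) (by simpa using hr0)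
  refine main _ ∅ (fun _ => ∅) W ∅ ⟨subset_rfl, ?_, by simp, by simp, by simp, by simp, by simp,
    fun b _ y hy _ => .inl hy, by simp⟩ rfl
  have := card_le_card hKW
  omega

end comb
end PlanarWidth

namespace PlanarWidth

open Finset Relation

section width
variable {V : Type} [DecidableEq V] [Fintype V]

/-- the weight of the cut of `W` by the threshold `t` of `f` -/
noncomputable def cut (m : V → V → ℝ) (W : Finset V) (f : V → ℕ) (t : ℕ) : ℝ :=
  ∑ u ∈ W, ∑ v ∈ W, if f u < t ∧ t ≤ f v then m u v else 0

/-- `W` has an ordering all of whose cuts are at most `w` -/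
def Good (m : V → V → ℝ) (W : Finset V) (w : ℝ) : Prop :=
  ∃ f : V → ℕ, Set.InjOn f W ∧ ∀ t, cut m W f t ≤ w

lemma Good.mono {m : V → V → ℝ} {W : Finset V} {w w' : ℝ} (h : Good m W w) (hw : w ≤ w') :
    Good m W w' := by
  obtain ⟨f, hf, h⟩ := h
  exact ⟨f, hf, fun t => (h t).trans hw⟩

lemma cut_half {m : V → V → ℝ} (h0 : ∀ u v, 0 ≤ m u v) (hs : ∀ u v, m u v = m v u)
    (W : Finset V) (f : V → ℕ) (t : ℕ) : 2 * cut m W f t ≤ ∑ u ∈ W, ∑ v ∈ W, m u v := by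
  have h1 : cut m W f t = ∑ u ∈ W, ∑ v ∈ W, if f v < t ∧ t ≤ f u then m u v else 0 := by
    unfold cut
    rw [sum_comm]
    refine sum_congr rfl fun u _ => sum_congr rfl fun v _ => ?_
    rw [hs]
  rw [two_mul]
  nth_rewrite 2 [h1]
  unfold cut
  rw [← sum_add_distrib]
  refine sum_le_sum fun u _ => ?_
  rw [← sum_add_distrib]
  refine sum_le_sum fun v _ => ?_
  have := h0 u v
  split_ifs with h2 h3 <;> first | omega | linarith

lemma good_small {m : V → V → ℝ} (h0 : ∀ u v, 0 ≤ m u v) (hs : ∀ u v, m u v = m v u) {Δ : ℝ}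
    (hΔ : ∀ u, ∑ v, m u v ≤ Δ) (W : Finset V) : Good m W (Δ * W.card / 2) := by
  refine ⟨fun v => (Fintype.equivFin V v : ℕ), fun a _ b _ h => ?_, fun t => ?_⟩
  · exact (Fintype.equivFin V).injective (Fin.ext h)
  · have h1 := cut_half h0 hs W (fun v => (Fintype.equivFin V v : ℕ)) t
    have h2 : ∑ u ∈ W, ∑ v ∈ W, m u v ≤ ∑ u ∈ W, Δ := sum_le_sum fun u _ =>
      (sum_le_sum_of_subset_of_nonneg (subset_univ W) fun v _ _ => h0 u v).trans (hΔ u)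
    rw [sum_const, nsmul_eq_mul] at h2
    linarith

lemma good_union {m : V → V → ℝ} (hs : ∀ u v, m u v = m v u) {W1 W2 : Finset V}
    (hd : Disjoint W1 W2) (hno : ∀ u ∈ W1, ∀ v ∈ W2, m u v = 0) {w : ℝ} (hw : 0 ≤ w)
    (h1 : Good m W1 w) (h2 : Good m W2 w) : Good m (W1 ∪ W2) w := by
  obtain ⟨f1, i1, c1⟩ := h1
  obtain ⟨f2, i2, c2⟩ := h2
  obtain ⟨M, hM⟩ : ∃ M, ∀ v ∈ W1, f1 v < M :=
    ⟨W1.sup f1 + 1, fun v hv => Nat.lt_succ_of_le (le_sup hv)⟩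
  let f : V → ℕ := fun v => if v ∈ W1 then f1 v else f2 v + M
  have e1 : ∀ v ∈ W1, f v = f1 v := fun v hv => by simp [f, hv]
  have e2 : ∀ v ∈ W2, f v = f2 v + M := fun v hv => by
    simp [f, disjoint_right.1 hd hv]
  refine ⟨f, ?_, fun t => ?_⟩
  · intro a ha b hb hab
    rcases mem_union.1 (mem_coe.1 ha) with ha | ha <;> rcases mem_union.1 (mem_coe.1 hb) with hb | hb
    · rw [e1 a ha, e1 b hb] at hab
      exact i1 ha hb hab
    · rw [e1 a ha, e2 b hb] at hab
      have := hM a ha; omega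
    · rw [e2 a ha, e1 b hb] at hab
      have := hM b hb; omega
    · rw [e2 a ha, e2 b hb] at hab
      exact i2 ha hb (by omega)
  · have hsum : cut m (W1 ∪ W2) f t = cut m W1 f1 t + cut m W2 f2 (t - M) := by
      unfold cut
      rw [sum_union hd]
      congr 1
      · refine sum_congr rfl fun u hu => ?_
        have z : ∑ v ∈ W2, (if f u < t ∧ t ≤ f v then m u v else 0) = 0 :=
          sum_eq_zero fun v hv => by rw [hno u hu v hv]; simp
        rw [sum_union hd, z, add_zero]
        exact sum_congr rfl fun v hv => by simp only [e1 u hu, e1 v hv]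
      · refine sum_congr rfl fun u hu => ?_
        rw [sum_union hd, sum_eq_zero, zero_add]
        · refine sum_congr rfl fun v hv => ?_
          rw [e2 u hu, e2 v hv]
          have hx : (f2 u + M < t ∧ t ≤ f2 v + M) ↔ (f2 u < t - M ∧ t - M ≤ f2 v) := by omega
          simp only [hx]
        · intro v hv
          rw [hs, hno v hv u hu]; simp
    rw [hsum]
    rcases le_total t M with h | h
    · have : cut m W2 f2 (t - M) = 0 := by
        rw [Nat.sub_eq_zero_of_le h]; simp [cut]
      rw [this, add_zero]; exact c1 t
    · have : cut m W1 f1 t = 0 := by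
        unfold cut
        refine sum_eq_zero fun u _ => sum_eq_zero fun v hv => if_neg ?_
        have := hM v hv
        omega
      rw [this, zero_add]; exact c2 _

lemma good_comps {m : V → V → ℝ} (hs : ∀ u v, m u v = m v u) {w : ℝ} (hw : 0 ≤ w) (h : ℕ)
    (hC : ∀ C : Finset V, 2 * C.card ≤ h → Good m C w) :
    ∀ U : Finset V, (∀ K, Conn (fun a b => m a b ≠ 0) K → K ⊆ U → 2 * K.card ≤ h) → Good m U w := by
  intro U
  induction U using Finset.strongInduction with
  | H U ih =>
  intro hU
  have hs' : ∀ a b, m a b ≠ 0 → m b a ≠ 0 := fun a b h => by rwa [hs]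
  rcases U.eq_empty_or_nonempty with rfl | ⟨v, hv⟩
  · exact hC ∅ (by simp)
  · have hsub : comp (fun a b => m a b ≠ 0) U v ⊆ U := comp_subset
    have hvm : v ∈ comp (fun a b => m a b ≠ 0) U v := mem_comp_self hv
    have g1 := hC _ (hU _ (comp_conn hs' hv) hsub)
    have g2 := ih (U \ comp (fun a b => m a b ≠ 0) U v)
      ⟨sdiff_subset, fun h => (mem_sdiff.1 (h hv)).2 hvm⟩
      (fun K hK hKU => hU K hK (hKU.trans sdiff_subset))
    have := good_union hs disjoint_sdiff (fun a ha b hb => by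
      by_contra hne
      exact (mem_sdiff.1 hb).2 (comp_closed ha hne (mem_sdiff.1 hb).1)) hw g1 g2
    rwa [union_sdiff_of_subset hsub] at this

lemma good_insert {m : V → V → ℝ} (h0 : ∀ u v, 0 ≤ m u v) (hs : ∀ u v, m u v = m v u) {Δ : ℝ}
    (hΔ : ∀ u, ∑ v, m u v ≤ Δ) {L S : Finset V} (hd : Disjoint L S) {w : ℝ}
    (hL : Good m L w) (hΔ0 : 0 ≤ Δ) : Good m (L ∪ S) (w + Δ * S.card / 2 + Δ) := by
  obtain ⟨f, hf, hcut⟩ := hL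
  let d : V → ℕ → ℝ := fun s g => ∑ v ∈ L, if f v < g then m s v else 0
  let x : V → ℝ := fun s => ∑ v ∈ L, m s v
  have hx0 : ∀ s, 0 ≤ x s := fun s => sum_nonneg fun v _ => h0 s v
  have dmono : ∀ s g g', g ≤ g' → d s g ≤ d s g' := by
    intro s g g' hg
    refine sum_le_sum fun v _ => ?_
    have := h0 s v
    split_ifs <;> first | omega | linarith
  obtain ⟨M, hM⟩ : ∃ M, ∀ v ∈ L, f v < M :=
    ⟨L.sup f + 1, fun v hv => Nat.lt_succ_of_le (le_sup hv)⟩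
  have hk : ∀ s, ∃ k, 2 * d s k ≤ x s ∧ ∀ g, k < g → x s ≤ 2 * d s g := by
    intro s
    by_cases hall : ∀ g, 2 * d s g ≤ x s
    · refine ⟨M, hall M, fun g hg => ?_⟩
      have : d s g = x s := sum_congr rfl fun v hv => if_pos ((hM v hv).trans hg)
      have := hx0 s
      linarith
    · push Not at hall
      classical
      have hfind := Nat.find_spec hall
      have hpos : Nat.find hall ≠ 0 := by
        intro hz
        rw [hz] at hfind
        have : d s 0 = 0 := by simp [d]
        have := hx0 s
        linarith
      refine ⟨Nat.find hall - 1, not_lt.1 (Nat.find_min hall (by omega)), fun g hg => ?_⟩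
      have := dmono s (Nat.find hall) g (by omega)
      linarith
  choose k hk1 hk2 using hk
  let N := Fintype.card V + 1
  let idx : V → ℕ := fun v => (Fintype.equivFin V v : ℕ)
  have hidx : ∀ v, idx v < N := fun v => Nat.lt_succ_of_lt (Fintype.equivFin V v).2
  let F : V → ℕ := fun v => if v ∈ L then N * (2 * f v + 1) else N * (2 * k v) + idx v
  have FL : ∀ v ∈ L, F v = N * (2 * f v + 1) := fun v hv => by simp [F, hv]
  have FS : ∀ v ∈ S, F v = N * (2 * k v) + idx v := fun v hv => by
    simp [F, disjoint_right.1 hd hv]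
  have hN : 0 < N := Nat.succ_pos _
  have dL : ∀ v ∈ L, F v / N = 2 * f v + 1 := fun v hv => by
    rw [FL v hv, Nat.mul_div_cancel_left _ hN]
  have dS : ∀ v ∈ S, F v / N = 2 * k v := fun v hv => by
    rw [FS v hv, Nat.mul_add_div hN, Nat.div_eq_of_lt (hidx v), add_zero]
  refine ⟨F, ?_, fun t => ?_⟩
  · intro a ha b hb hab
    have hab' : F a / N = F b / N := by rw [hab]
    rcases mem_union.1 (mem_coe.1 ha) with ha | ha <;> rcases mem_union.1 (mem_coe.1 hb) with hb | hb
    · rw [dL a ha, dL b hb] at hab'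
      exact hf ha hb (by omega)
    · rw [dL a ha, dS b hb] at hab'; omega
    · rw [dS a ha, dL b hb] at hab'; omega
    · rw [dS a ha, dS b hb] at hab'
      rw [FS a ha, FS b hb, hab'] at hab
      exact (Fintype.equivFin V).injective (Fin.ext (by simpa [idx] using hab))
  · have hex : ∃ g, t ≤ N * (2 * g + 1) := ⟨t, by nlinarith⟩
    obtain ⟨g, hg1, hg2⟩ : ∃ g, t ≤ N * (2 * g + 1) ∧ ∀ g' < g, N * (2 * g' + 1) < t :=
      ⟨Nat.find hex, Nat.find_spec hex, fun g' h => not_le.1 (Nat.find_min hex h)⟩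
    have hLt : ∀ v ∈ L, (F v < t ↔ f v < g) := by
      intro v hv
      rw [FL v hv]
      constructor
      · intro h
        by_contra hc
        push Not at hc
        have : N * (2 * g + 1) ≤ N * (2 * f v + 1) := Nat.mul_le_mul_left _ (by omega)
        omega
      · exact hg2 _
    have hLt' : ∀ v ∈ L, (t ≤ F v ↔ g ≤ f v) := fun v hv => by
      have := hLt v hv
      omega
    have hSl : ∀ s ∈ S, F s < t → k s ≤ g := by
      intro s hs' h
      by_contra hc
      push Not at hc
      rw [FS s hs'] at h
      have : N * (2 * g + 1) ≤ N * (2 * k s) := Nat.mul_le_mul_left _ (by omega)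
      omega
    have hSr : ∀ s ∈ S, t ≤ F s → g ≤ k s := by
      intro s hs' h
      by_contra hc
      push Not at hc
      rw [FS s hs'] at h
      have h1 := hg2 (k s) hc
      have h2 := hidx s
      rw [Nat.mul_add, mul_one] at h1
      omega
    let e : V → ℝ := fun s => ∑ v ∈ L, if f v = g then m s v else 0
    have hsplit : cut m (L ∪ S) F t = cut m L f g +
        ∑ s ∈ S, ((∑ v ∈ L, if F v < t ∧ t ≤ F s then m s v else 0) +
          ∑ v ∈ L, if F s < t ∧ t ≤ F v then m s v else 0) + cut m S F t := by
      unfold cut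
      rw [sum_union hd]
      simp only [sum_union hd, sum_add_distrib]
      have e1 : ∑ u ∈ L, ∑ v ∈ L, (if F u < t ∧ t ≤ F v then m u v else 0) =
          ∑ u ∈ L, ∑ v ∈ L, (if f u < g ∧ g ≤ f v then m u v else 0) :=
        sum_congr rfl fun u hu => sum_congr rfl fun v hv => by simp only [hLt u hu, hLt' v hv]
      have e2 : ∑ u ∈ L, ∑ v ∈ S, (if F u < t ∧ t ≤ F v then m u v else 0) =
          ∑ s ∈ S, ∑ v ∈ L, (if F v < t ∧ t ≤ F s then m s v else 0) := by
        rw [sum_comm]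
        exact sum_congr rfl fun u hu => sum_congr rfl fun v hv => by rw [hs]
      rw [e1, e2]; ring
    have hc : ∀ s ∈ S, ((∑ v ∈ L, if F v < t ∧ t ≤ F s then m s v else 0) +
          ∑ v ∈ L, if F s < t ∧ t ≤ F v then m s v else 0) ≤ x s / 2 + e s := by
      intro s hsS
      have he0 : 0 ≤ e s := sum_nonneg fun v _ => by
        have := h0 s v
        split_ifs <;> linarith
      by_cases hst : F s < t
      · have z1 : (∑ v ∈ L, if F v < t ∧ t ≤ F s then m s v else 0) = 0 :=
          sum_eq_zero fun v _ => if_neg (by omega)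
        have z2 : (∑ v ∈ L, if F s < t ∧ t ≤ F v then m s v else 0) = x s - d s g := by
          simp only [x, d]
          rw [← sum_sub_distrib]
          refine sum_congr rfl fun v hv => ?_
          have := hLt v hv
          split_ifs <;> first | omega | simp
        rw [z1, z2, zero_add]
        rcases (hSl s hsS hst).lt_or_eq with h | h
        · have := hk2 s g h
          linarith
        · have h1 := hk2 s (g + 1) (by omega)
          have h2 : d s (g + 1) = d s g + e s := by
            simp only [d, e]
            rw [← sum_add_distrib]
            refine sum_congr rfl fun v _ => ?_
            split_ifs <;> first | omega | simp
          linarith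
      · have z1 : (∑ v ∈ L, if F s < t ∧ t ≤ F v then m s v else 0) = 0 :=
          sum_eq_zero fun v _ => if_neg (by omega)
        have z2 : (∑ v ∈ L, if F v < t ∧ t ≤ F s then m s v else 0) = d s g := by
          refine sum_congr rfl fun v hv => ?_
          have := hLt v hv
          split_ifs <;> first | omega | simp
        rw [z1, z2, add_zero]
        have h1 := dmono s g (k s) (hSr s hsS (not_lt.1 hst))
        have h2 := hk1 s
        linarith
    have hesum : ∑ s ∈ S, e s ≤ Δ := by
      simp only [e]
      rw [sum_comm]
      have : ∀ v ∈ L, (∑ s ∈ S, if f v = g then m s v else 0) ≤ if f v = g then Δ else 0 := by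
        intro v _
        split_ifs with h
        · refine le_trans ?_ (hΔ v)
          rw [sum_congr rfl fun s _ => hs s v]
          exact sum_le_sum_of_subset_of_nonneg (subset_univ S) fun u _ _ => h0 v u
        · simp
      refine (sum_le_sum this).trans ?_
      rw [← sum_filter, sum_const, nsmul_eq_mul]
      have hc1 : (L.filter fun v => f v = g).card ≤ 1 := by
        refine card_le_one.2 fun a ha b hb => ?_
        obtain ⟨ha1, ha2⟩ := mem_filter.1 ha
        obtain ⟨hb1, hb2⟩ := mem_filter.1 hb
        exact hf ha1 hb1 (by omega)
      have : ((L.filter fun v => f v = g).card : ℝ) ≤ 1 := by exact_mod_cast hc1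
      nlinarith
    have hSS := cut_half h0 hs S F t
    have hdeg : ∑ s ∈ S, (x s + ∑ v ∈ S, m s v) ≤ S.card * Δ := by
      rw [← nsmul_eq_mul, ← sum_const]
      refine sum_le_sum fun s _ => ?_
      simp only [x]
      rw [← sum_union hd]
      exact (sum_le_sum_of_subset_of_nonneg (subset_univ _) fun v _ _ => h0 s v).trans (hΔ s)
    rw [sum_add_distrib] at hdeg
    have h3 : ∑ s ∈ S, ((∑ v ∈ L, if F v < t ∧ t ≤ F s then m s v else 0) +
          ∑ v ∈ L, if F s < t ∧ t ≤ F v then m s v else 0) ≤ (∑ s ∈ S, x s) / 2 + ∑ s ∈ S, e s := by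
      refine (sum_le_sum hc).trans (le_of_eq ?_)
      rw [sum_add_distrib, sum_div]
    rw [hsplit]
    have := hcut g
    linarith

lemma num1 : 6 + 2 * √6 + 5 / 2 * √3 + 1 / 30 ≤ 6 * √2 + 4 * √3 := by
  have h2 : (1.414 : ℝ) ≤ √2 := Real.le_sqrt_of_sq_le (by norm_num)
  have h3 : (1.732 : ℝ) ≤ √3 := Real.le_sqrt_of_sq_le (by norm_num)
  have h6 : √6 ≤ 2.4495 := Real.sqrt_le_iff.2 (by norm_num)
  linarith

theorem good_main {m : V → V → ℝ} (h0 : ∀ u v, 0 ≤ m u v) (hs : ∀ u v, m u v = m v u) {Δ : ℝ}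
    (hΔ : ∀ u, ∑ v, m u v ≤ Δ) (hΔ0 : 0 ≤ Δ)
    (hno : ¬ ∃ C, K5Model (fun a b => m a b ≠ 0) C) (W : Finset V) :
    Good m W ((6 * √2 + 4 * √3) * Δ * √(W.card : ℝ)) := by
  induction hn : W.card using Nat.strong_induction_on generalizing W with
  | _ n ih =>
  subst hn
  set q : ℝ := √(W.card : ℝ) with hq
  have hq0 : 0 ≤ q := Real.sqrt_nonneg _
  have hqq : q * q = W.card := Real.mul_self_sqrt (by positivity)
  have hnum := num1
  have h60 := Real.sqrt_nonneg 6
  have h30 := Real.sqrt_nonneg 3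
  rcases le_total W.card 900 with hsm | hbig
  · refine (good_small h0 hs hΔ W).mono ?_
    have hq30 : q ≤ 30 := Real.sqrt_le_iff.2 ⟨by norm_num, by
      have : (W.card : ℝ) ≤ 900 := by exact_mod_cast hsm
      linarith⟩
    have h2 : (1.414 : ℝ) ≤ √2 := Real.le_sqrt_of_sq_le (by norm_num)
    have h3 : (1.732 : ℝ) ≤ √3 := Real.le_sqrt_of_sq_le (by norm_num)
    rw [← hqq]
    have h15 : q / 2 ≤ 6 * √2 + 4 * √3 := by linarith
    have := mul_le_mul_of_nonneg_right h15 (mul_nonneg hΔ0 hq0)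
    linarith
  · have hq30 : 30 ≤ q := Real.le_sqrt_of_sq_le (by
      have : (900 : ℝ) ≤ W.card := by exact_mod_cast hbig
      linarith)
    obtain ⟨S, hSW, hScard, hK⟩ := separator (Adj := fun a b => m a b ≠ 0)
      (fun a b h => by rwa [hs]) hno W
    have hw : 0 ≤ (6 + 2 * √6) * Δ * q := by positivity
    have hKs : (6 * √2 + 4 * √3) = √2 * (6 + 2 * √6) := by
      have h6 : √6 = √2 * √3 := by rw [← Real.sqrt_mul (by norm_num)]; norm_num
      have h22 : √2 * √2 = 2 := Real.mul_self_sqrt (by norm_num)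
      rw [h6]
      linear_combination (-2 * √3) * h22
    have gL := good_comps hs hw W.card (fun C hC => by
      refine (ih C.card (by omega) C rfl).mono ?_
      have h1 : √2 * √(C.card : ℝ) ≤ q := by
        rw [← Real.sqrt_mul (by norm_num)]
        exact Real.sqrt_le_sqrt (by exact_mod_cast hC)
      rw [hKs]
      have := mul_le_mul_of_nonneg_left h1 (show 0 ≤ (6 + 2 * √6) * Δ by positivity)
      linarith) (W \ S) (fun K hKc hKsub => hK K hKc (hKsub.trans sdiff_subset)
        (disjoint_left.2 fun v hv => (mem_sdiff.1 (hKsub hv)).2))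
    have gW := good_insert h0 hs hΔ (disjoint_sdiff.symm : Disjoint (W \ S) S) gL hΔ0
    rw [sdiff_union_of_subset hSW] at gW
    refine gW.mono ?_
    rw [← hq] at hScard
    have a1 := mul_le_mul_of_nonneg_left hScard hΔ0
    have a2 := mul_le_mul_of_nonneg_left hq30 hΔ0
    have a3 := mul_le_mul_of_nonneg_right hnum (mul_nonneg hΔ0 hq0)
    linarith

end width
end PlanarWidth


namespace PlanarWidth

open Finset Relation

section final

/-- the part of the drawing spanned by the vertex set `S` -/
def Gam (G : FinMultigraph) (fv : G.V → ℝ × ℝ) (fe : G.E → ℝ → ℝ × ℝ) (S : Finset G.V) :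
    Set (ℝ × ℝ) :=
  {z | (∃ v ∈ S, z = fv v) ∨ ∃ e, ∃ t ∈ Set.Icc (0 : ℝ) 1, (∀ v ∈ G.ends e, v ∈ S) ∧ z = fe e t}

/-- weight of a pair of vertices: number of edges joining them -/
noncomputable def wt (G : FinMultigraph) (u v : G.V) : ℝ :=
  if u = v then 0 else ({e | G.ends e = s(u, v)}.ncard : ℝ)

lemma wt_ne_zero {G : FinMultigraph} {u v : G.V} (h : wt G u v ≠ 0) : ∃ e, G.ends e = s(u, v) := by
  unfold wt at h
  by_contra hc
  push Not at hc
  apply h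
  split_ifs
  · rfl
  · have : {e | G.ends e = s(u, v)} = ∅ := by
      ext e; simpa using hc e
    rw [this]; simp

lemma wt_nonneg (G : FinMultigraph) (u v : G.V) : 0 ≤ wt G u v := by
  unfold wt; split_ifs <;> positivity

lemma wt_symm (G : FinMultigraph) (u v : G.V) : wt G u v = wt G v u := by
  unfold wt
  simp only [eq_comm (a := u) (b := v), Sym2.eq_swap (a := u) (b := v)]

lemma wt_sum (G : FinMultigraph) (u : G.V) : ∑ v, wt G u v ≤ (G.maxDegree : ℝ) := by
  classical
  have h1 : ∑ v, wt G u v ≤ ({e | u ∈ G.ends e}.ncard : ℝ) := by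
    have h2 : ∀ v, wt G u v ≤ ((univ.filter fun e => G.ends e = s(u, v)).card : ℝ) := by
      intro v
      unfold wt
      split_ifs
      · positivity
      · rw [← Set.ncard_coe_finset]; simp
    refine (sum_le_sum fun v _ => h2 v).trans ?_
    rw [← Nat.cast_sum, ← card_biUnion]
    · rw [Nat.cast_le, ← Set.ncard_coe_finset]
      refine Set.ncard_le_ncard ?_ (ht := Set.toFinite {e | u ∈ G.ends e})
      intro e he
      simp only [coe_biUnion, Set.mem_iUnion, mem_coe, mem_univ, mem_filter, true_and, exists_prop] at he
      obtain ⟨v, hv⟩ := he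
      simp [hv]
    · intro v _ w _ hvw
      change Disjoint _ _
      rw [disjoint_left]
      intro e he he'
      simp only [mem_filter, mem_univ, true_and] at he he'
      rw [he] at he'
      exact hvw (Sym2.congr_right.1 he')
  refine h1.trans ?_
  have h3 : G.degree u ≤ G.maxDegree := Finset.le_sup (f := G.degree) (mem_univ u)
  have h4 : {e | u ∈ G.ends e}.ncard ≤ G.degree u := Nat.le_add_right _ _
  exact_mod_cast h4.trans h3

lemma no_model (G : FinMultigraph) (hG : G.IsPlanar) :
    ¬ ∃ C, K5Model (fun a b => wt G a b ≠ 0) C := by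
  rintro ⟨C, hconn, hdisj, hadj⟩
  obtain ⟨fv, fe, inj, cont, ends, -, hv, he⟩ := hG
  have norm : ∀ S z, z ∈ Gam G fv fe S → (∃ v ∈ S, z = fv v) ∨
      ∃ e, ∃ t ∈ Set.Ioo (0 : ℝ) 1, (∀ v ∈ G.ends e, v ∈ S) ∧ z = fe e t := by
    rintro S z (h | ⟨e, t, ht, h, rfl⟩)
    · exact Or.inl h
    · obtain ⟨u, v, huv, h0, h1⟩ := ends e
      rw [huv] at h
      rcases eq_or_lt_of_le ht.1 with rfl | h0'
      · exact Or.inl ⟨u, h u (by simp), h0⟩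
      rcases eq_or_lt_of_le ht.2 with rfl | h1'
      · exact Or.inl ⟨v, h v (by simp), h1⟩
      · exact Or.inr ⟨e, t, ⟨h0', h1'⟩, by rwa [huv], rfl⟩
  have gdisj : ∀ S S', Disjoint S S' → ∀ z, z ∈ Gam G fv fe S → z ∉ Gam G fv fe S' := by
    intro S S' hd z hz hz'
    rcases norm _ _ hz with ⟨v, hvS, rfl⟩ | ⟨e, t, ht, hS, rfl⟩
    · rcases norm _ _ hz' with ⟨w, hw, h⟩ | ⟨e, t, ht, hS, h⟩
      · exact disjoint_left.1 hd hvS (inj h ▸ hw)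
      · exact hv e t ht ⟨v, h⟩
    · rcases norm _ _ hz' with ⟨w, hw, h⟩ | ⟨e', t', ht', hS', h⟩
      · exact hv e t ht ⟨w, h.symm⟩
      · refine he e e' ?_ t ht t' ht' h
        rintro rfl
        obtain ⟨u, v, huv, -⟩ := ends e
        exact disjoint_left.1 hd (hS u (by simp [huv])) (hS' u (by simp [huv]))
  have step : ∀ S a b, a ∈ S → b ∈ S → wt G a b ≠ 0 → JoinedIn (Gam G fv fe S) (fv a) (fv b) := by
    intro S a b ha hb hab
    obtain ⟨e, hab⟩ := wt_ne_zero hab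
    obtain ⟨u, v, huv, h0, h1⟩ := ends e
    have hJ : JoinedIn (Gam G fv fe S) (fv u) (fv v) := by
      refine JoinedIn.ofLine (cont e) h0 h1 ?_
      rintro _ ⟨t, ht, rfl⟩
      refine Or.inr ⟨e, t, ht, ?_, rfl⟩
      intro w hw
      rw [hab] at hw
      rcases Sym2.mem_iff.1 hw with rfl | rfl <;> assumption
    rw [hab] at huv
    rcases Sym2.eq_iff.1 huv with ⟨rfl, rfl⟩ | ⟨rfl, rfl⟩
    · exact hJ
    · exact hJ.symm
  have mono : ∀ S T, S ⊆ T → Gam G fv fe S ⊆ Gam G fv fe T := by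
    rintro S T hST z (⟨v, h, h'⟩ | ⟨e, t, ht, h, h'⟩)
    · exact Or.inl ⟨v, hST h, h'⟩
    · exact Or.inr ⟨e, t, ht, fun v hv => hST (h v hv), h'⟩
  have joined : ∀ i, ∀ x ∈ C i, ∀ y ∈ C i, JoinedIn (Gam G fv fe (C i)) (fv x) (fv y) := by
    intro i x hx y hy
    have key : y ∈ C i ∧ JoinedIn (Gam G fv fe (C i)) (fv x) (fv y) := by
      have := (hconn i).2 x hx y hy
      clear hy
      induction this with
      | refl => exact ⟨hx, JoinedIn.refl (Or.inl ⟨x, hx, rfl⟩)⟩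
      | tail _ hbc ih => exact ⟨hbc.2, ih.2.trans (step _ _ _ ih.1 hbc.2 hbc.1)⟩
    exact key.2
  choose c hc using fun i => (hconn i).1
  have big : ∀ i j, i ≠ j → JoinedIn (Gam G fv fe (C i ∪ C j)) (fv (c i)) (fv (c j)) := by
    intro i j hij
    obtain ⟨x, hx, y, hy, hxy⟩ := hadj i j hij
    refine ((joined i _ (hc i) x hx).mono (mono _ _ subset_union_left)).trans ?_
    refine (step _ x y (mem_union_left _ hx) (mem_union_right _ hy) hxy).trans ?_
    exact (joined j _ hy _ (hc j)).mono (mono _ _ subset_union_right)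
  have ex : ∀ i j, ∃ g : ℝ → ℝ × ℝ, i ≠ j → Continuous g ∧ g 0 = fv (c i) ∧ g 1 = fv (c j) ∧
      ∀ t, g t ∈ Gam G fv fe (C i ∪ C j) := by
    intro i j
    by_cases hij : i = j
    · exact ⟨fun _ => 0, fun h => (h hij).elim⟩
    · obtain ⟨γ, hγ⟩ := big i j hij
      refine ⟨γ.extend, fun _ => ⟨γ.continuous_extend, by simp, by simp, fun t => ?_⟩⟩
      have : γ.extend t ∈ Set.range γ := by
        rw [← Path.extend_range]; exact ⟨t, rfl⟩
      obtain ⟨s, hs⟩ := this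
      rw [← hs]; exact hγ s
  choose g hg using ex
  let φ := Complex.equivRealProdCLM.symm
  refine no_K5_drawing (fun i => φ (fv (c i))) (fun i j t => φ (g i j t))
    (fun i j h => φ.continuous.comp (hg i j h).1) (fun i j h => by simp only [(hg i j h).2.1])
    (fun i j h => by simp only [(hg i j h).2.2.1]) ?_
  intro i j k l hij hkl hik hil hjk hjl s t h
  have h' := φ.injective h
  refine gdisj (C i ∪ C j) (C k ∪ C l) ?_ _ ((hg i j hij).2.2.2 s) (h' ▸ (hg k l hkl).2.2.2 t)
  rw [disjoint_union_left, disjoint_union_right, disjoint_union_right]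
  exact ⟨⟨hdisj _ _ hik, hdisj _ _ hil⟩, hdisj _ _ hjk, hdisj _ _ hjl⟩

lemma boundary_le (G : FinMultigraph) (f : G.V → ℕ) (t : ℕ) :
    ((G.edgeBoundary {v | f v < t}).ncard : ℝ) ≤ cut (wt G) univ f t := by
  classical
  have h1 : G.edgeBoundary {v | f v < t} ⊆
      ((univ : Finset (G.V × G.V)).biUnion fun p =>
        if f p.1 < t ∧ t ≤ f p.2 then univ.filter (fun e => G.ends e = s(p.1, p.2)) else ∅ :
          Finset G.E) := by
    rintro e ⟨u, v, huv, hu, hv⟩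
    rw [mem_coe, mem_biUnion]
    refine ⟨(u, v), mem_univ _, ?_⟩
    have hu' : f u < t := hu
    have hv' : t ≤ f v := not_lt.1 hv
    simp [hu', hv', huv]
  have h2 := Set.ncard_le_ncard h1 (Finset.finite_toSet _)
  rw [Set.ncard_coe_finset] at h2
  have h3 := h2.trans card_biUnion_le
  have h4 : ((G.edgeBoundary {v | f v < t}).ncard : ℝ) ≤ _ := Nat.cast_le.2 h3
  refine h4.trans ?_
  rw [Nat.cast_sum]
  unfold cut
  rw [← sum_product', univ_product_univ]
  refine sum_le_sum fun p _ => ?_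
  split_ifs with h
  · have hne : p.1 ≠ p.2 := by rintro h'; rw [h'] at h; omega
    unfold wt
    rw [if_neg hne, ← Set.ncard_coe_finset]
    simp
  · simp

lemma exists_order (G : FinMultigraph) (f : G.V → ℕ) (hf : Function.Injective f) :
    ∃ φ : Fin G.order ≃ G.V, ∀ i, ⇑φ '' {j | j ≤ i} = {v | f v < f (φ i) + 1} := by
  letI : LinearOrder G.V := LinearOrder.lift' f hf
  let ψ : Fin G.order ≃o G.V := Fintype.orderIsoFinOfCardEq G.V rfl
  refine ⟨ψ.toEquiv, fun i => ?_⟩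
  ext v
  constructor
  · rintro ⟨j, hj, rfl⟩
    exact Nat.lt_succ_of_le (ψ.monotone hj : f (ψ j) ≤ f (ψ i))
  · intro hv
    refine ⟨ψ.symm v, ?_, ψ.apply_symm_apply v⟩
    have : v ≤ ψ i := Nat.le_of_lt_succ hv
    exact (ψ.symm_apply_le).2 this

end final

end PlanarWidth

/-- Theorem 2.1. Let `G` be a finite planar graph with `v(G)`
vertices and maximal vertex degree `Δ(G)`. Then
`width(G) ≤ (6√2 + 4√3) Δ(G) √(v(G))`. -/
theorem width_le_of_planar (G : FinMultigraph) (hG : G.IsPlanar) :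
    (G.width : ℝ) ≤
      (6 * Real.sqrt 2 + 4 * Real.sqrt 3) * (G.maxDegree : ℝ) *
        Real.sqrt (G.order : ℝ) := by
  obtain ⟨f, hf, hcut⟩ := PlanarWidth.good_main (PlanarWidth.wt_nonneg G) (PlanarWidth.wt_symm G)
    (PlanarWidth.wt_sum G) (Nat.cast_nonneg _) (PlanarWidth.no_model G hG) Finset.univ
  have hf' : Function.Injective f := fun a b h => hf (by simp) (by simp) h
  obtain ⟨φ, hφ⟩ := PlanarWidth.exists_order G f hf'
  have h1 : G.width ≤ G.orderingWidth φ := Nat.sInf_le ⟨φ, rfl⟩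
  have h2 : G.orderingWidth φ ≤ ⌊(6 * Real.sqrt 2 + 4 * Real.sqrt 3) * (G.maxDegree : ℝ) *
        Real.sqrt (G.order : ℝ)⌋₊ := by
    refine Finset.sup_le fun i _ => Nat.le_floor ?_
    rw [hφ i]
    exact (PlanarWidth.boundary_le G f _).trans (hcut _)
  exact (Nat.cast_le.2 (h1.trans h2)).trans (Nat.floor_le (by positivity))
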